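/- In the exterior algebra Λ described in the context, for every integer t ≥ 1 the following identity holds: (I₁ − I₂ + I₃)^{∧ t} = I₃^{∧ (t−1)} ∧ (t²·I₁ − t·I₂ + I₃), where I₂ := I₂₁ + I₂₂ + I₂₃ + I₂₄ and I₃ := I₃₁ + I₃₂. -/

import Mathlib

set_option synthInstance.maxHeartbeats 1000000
set_option maxHeartbeats 1000000

noncomputable section

/-- The base commutative ring: polynomials over `ℂ` in the `2m` variables
`v₁, …, v_m` (encoded `(i, 0)`) and `w₁, …, w_m` (encoded `(i, 1)`, playing the
role of the conjugates `v̄_i`). -/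
abbrev PolyR (m : ℕ) := MvPolynomial (Fin m × Fin 2) ℂ

/-- The free module with basis `a_i, b_i, c_i, d_i` (encoded by `Fin m × Fin 4`,
playing the roles of `dz_i, dz̄_i, dv_i, dv̄_i`). -/
abbrev ModM (m : ℕ) := Fin m × Fin 4 → PolyR m

/-- The exterior algebra `Λ` of the free module `ModM m` over `PolyR m`. -/
abbrev Lam (m : ℕ) := ExteriorAlgebra (PolyR m) (ModM m)

/-- The basis generators: `eGen m 0 i = a_i`, `eGen m 1 i = b_i`,
`eGen m 2 i = c_i`, `eGen m 3 i = d_i`. -/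
def eGen (m : ℕ) (t : Fin 4) (i : Fin m) : Lam m :=
  ExteriorAlgebra.ι (PolyR m) (Pi.single (i, t) 1)

/-- The scalar `v_i`. -/
def vS (m : ℕ) (i : Fin m) : PolyR m := MvPolynomial.X (i, 0)

/-- The scalar `w_i` (playing the role of `v̄_i`). -/
def wS (m : ℕ) (i : Fin m) : PolyR m := MvPolynomial.X (i, 1)

/-- `I₁ = (Σ w_i a_i) ∧ (Σ v_j b_j) ∧ (Σ w_k c_k) ∧ (Σ v_l d_l)`. -/
def I1 (m : ℕ) : Lam m :=
  (∑ i, wS m i • eGen m 0 i) * (∑ j, vS m j • eGen m 1 j)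
    * (∑ k, wS m k • eGen m 2 k) * (∑ l, vS m l • eGen m 3 l)

/-- `I₂₁ = (Σ a_i ∧ b_i) ∧ (Σ w_k c_k) ∧ (Σ v_l d_l)`. -/
def I21 (m : ℕ) : Lam m :=
  (∑ i, eGen m 0 i * eGen m 1 i) * (∑ k, wS m k • eGen m 2 k) * (∑ l, vS m l • eGen m 3 l)

/-- `I₂₂ = (Σ v_j b_j) ∧ (Σ w_k c_k) ∧ (Σ a_i ∧ d_i)`. -/
def I22 (m : ℕ) : Lam m :=
  (∑ j, vS m j • eGen m 1 j) * (∑ k, wS m k • eGen m 2 k) * (∑ i, eGen m 0 i * eGen m 3 i)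

/-- `I₂₃ = (Σ w_i a_i) ∧ (Σ b_j ∧ c_j) ∧ (Σ v_l d_l)`. -/
def I23 (m : ℕ) : Lam m :=
  (∑ i, wS m i • eGen m 0 i) * (∑ j, eGen m 1 j * eGen m 2 j) * (∑ l, vS m l • eGen m 3 l)

/-- `I₂₄ = (Σ w_i a_i) ∧ (Σ v_j b_j) ∧ (Σ c_k ∧ d_k)`. -/
def I24 (m : ℕ) : Lam m :=
  (∑ i, wS m i • eGen m 0 i) * (∑ j, vS m j • eGen m 1 j) * (∑ k, eGen m 2 k * eGen m 3 k)

/-- `I₃₁ = (Σ b_i ∧ c_i) ∧ (Σ a_j ∧ d_j)`. -/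
def I31 (m : ℕ) : Lam m :=
  (∑ i, eGen m 1 i * eGen m 2 i) * (∑ j, eGen m 0 j * eGen m 3 j)

/-- `I₃₂ = (Σ a_i ∧ b_i) ∧ (Σ c_k ∧ d_k)`. -/
def I32 (m : ℕ) : Lam m :=
  (∑ i, eGen m 0 i * eGen m 1 i) * (∑ k, eGen m 2 k * eGen m 3 k)

/-- `I₂ = I₂₁ + I₂₂ + I₂₃ + I₂₄`. -/
def I2 (m : ℕ) : Lam m := I21 m + I22 m + I23 m + I24 m

/-- `I₃ = I₃₁ + I₃₂`. -/
def I3 (m : ℕ) : Lam m := I31 m + I32 m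

/-!
Let `α, β, γ, δ` be the linear sums in `I₁`, and `P, Q, S, T` the quadratic sums in `a b`, `c d`,
`b c`, `a d`. Products of two vectors are central, so everything happens in the commutative ring
generated by `p = αβ`, `q = γδ`, `s = βγ`, `u = αδ` and `P, Q, S, T`, where `I₁ = pq = su`,
`I₂ = Pq + sT + uS + pQ` and `I₃ = ST + PQ`. The products of two of `p, q, s, u` other than `pq` and
`su` vanish because they repeat a vector, whence `I₁² = I₁I₂ = 0` and `I₂² = 2 I₃I₁`. In the `t`-th
power `I₃ᵗ⁻¹I₁` therefore occurs `t` times from the factors `I₁` and `2 * t.choose 2` times from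
pairs of factors `I₂`, that is `t ^ 2` times.
-/

section CommRing

variable {A : Type*} [CommRing A]

theorem sub_add_pow_succ_of_sq_eq {x y z : A} (hxx : x ^ 2 = 0) (hxy : x * y = 0)
    (hyy : y ^ 2 = 2 * (z * x)) (n : ℕ) :
    (x - y + z) ^ (n + 1) = z ^ n * ((n + 1) ^ 2 • x - (n + 1) • y + z) := by
  simp only [nsmul_eq_mul, Nat.cast_pow, Nat.cast_add, Nat.cast_one]
  induction n with
  | zero => simp
  | succ n ih =>
    rw [pow_succ, ih]
    push_cast
    linear_combination z ^ n * ((n + 1) ^ 2 * hxx - ((n + 1) ^ 2 + (n + 1)) * hxy + (n + 1) * hyy)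

theorem mul_sub_add_pow_succ_of_mul_eq_mul {p q s u P Q S T : A}
    (hpp : p ^ 2 = 0) (hqq : q ^ 2 = 0) (hss : s ^ 2 = 0) (huu : u ^ 2 = 0)
    (hps : p * s = 0) (hpu : p * u = 0) (hsq : s * q = 0) (hqu : q * u = 0)
    (hsu : s * u = p * q) (n : ℕ) :
    (p * q - (P * q + s * T + u * S + p * Q) + (S * T + P * Q)) ^ (n + 1)
      = (S * T + P * Q) ^ n *
        ((n + 1) ^ 2 • (p * q) - (n + 1) • (P * q + s * T + u * S + p * Q)
          + (S * T + P * Q)) := by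
  apply sub_add_pow_succ_of_sq_eq
  · linear_combination q ^ 2 * hpp
  · linear_combination p * P * hqq + q * T * hps + q * S * hpu + q * Q * hpp
  · linear_combination P ^ 2 * hqq + T ^ 2 * hss + S ^ 2 * huu + Q ^ 2 * hpp
      + 2 * P * T * hsq + 2 * P * S * hqu + 2 * T * Q * hps + 2 * S * Q * hpu + 2 * T * S * hsu

end CommRing

section ExteriorAlgebra

open ExteriorAlgebra

variable {R M : Type*} [CommRing R] [AddCommGroup M] [Module R M]

theorem ι_mul_ι_swap (x y : M) : ι R x * ι R y = -(ι R y * ι R x) :=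
  eq_neg_of_add_eq_zero_left (ι_add_mul_swap x y)

theorem ι_mul_ι_mul_ι_self (x y : M) : ι R x * ι R y * ι R x = 0 := by
  rw [ι_mul_ι_swap, neg_mul, mul_assoc, ι_sq_zero, mul_zero, neg_zero]

theorem ι_mul_ι_mem_center (x y : M) :
    ι R x * ι R y ∈ Subring.center (ExteriorAlgebra R M) := by
  rw [Subring.mem_center_iff]
  intro z
  induction z using ExteriorAlgebra.induction with
  | algebraMap r => exact Algebra.commutes r _
  | ι u =>
    calc ι R u * (ι R x * ι R y) = -(ι R x * (ι R u * ι R y)) := by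
          rw [← mul_assoc, ι_mul_ι_swap u x, neg_mul, mul_assoc]
      _ = ι R x * ι R y * ι R u := by rw [ι_mul_ι_swap u y, mul_neg, neg_neg, mul_assoc]
  | mul z₁ z₂ h₁ h₂ => rw [mul_assoc, h₂, ← mul_assoc, h₁, mul_assoc]
  | add z₁ z₂ h₁ h₂ => rw [add_mul, mul_add, h₁, h₂]

variable (R) in
/-- The bivector `x ∧ y`, bundled as an element of the center of the exterior algebra so that
commutative ring identities apply to it. -/
def centralBivector (x y : M) : Subring.center (ExteriorAlgebra R M) :=
  ⟨ι R x * ι R y, ι_mul_ι_mem_center x y⟩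

namespace centralBivector

theorem mul_eq_zero_of_left_eq_left (x y z : M) :
    centralBivector R x y * centralBivector R x z = 0 :=
  Subtype.ext <| show ι R x * ι R y * (ι R x * ι R z) = 0 by
    rw [← mul_assoc, ι_mul_ι_mul_ι_self, zero_mul]

theorem mul_eq_zero_of_right_eq_left (x y z : M) :
    centralBivector R x y * centralBivector R y z = 0 :=
  Subtype.ext <| show ι R x * ι R y * (ι R y * ι R z) = 0 by
    rw [mul_assoc, ← mul_assoc (ι R y), ι_sq_zero, zero_mul, mul_zero]

theorem mul_eq_zero_of_right_eq_right (x y z : M) :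
    centralBivector R x z * centralBivector R y z = 0 :=
  Subtype.ext <| show ι R x * ι R z * (ι R y * ι R z) = 0 by
    rw [mul_assoc, ← mul_assoc (ι R z), ι_mul_ι_mul_ι_self, mul_zero]

theorem sq_eq_zero (x y : M) : centralBivector R x y ^ 2 = 0 := by
  rw [sq, mul_eq_zero_of_left_eq_left]

theorem inner_mul_outer (x y z w : M) :
    centralBivector R y z * centralBivector R x w =
      centralBivector R x y * centralBivector R z w :=
  Subtype.ext <|
    calc ι R y * ι R z * (ι R x * ι R w) = ι R x * (ι R y * ι R z) * ι R w := by
          rw [← mul_assoc, Subring.mem_center_iff.mp (ι_mul_ι_mem_center y z)]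
      _ = ι R x * ι R y * (ι R z * ι R w) := by simp only [mul_assoc]

end centralBivector

open centralBivector in
theorem stmt4_general {α β γ δ P Q S T : ExteriorAlgebra R M}
    (hα : α ∈ LinearMap.range (ι R)) (hβ : β ∈ LinearMap.range (ι R))
    (hγ : γ ∈ LinearMap.range (ι R)) (hδ : δ ∈ LinearMap.range (ι R))
    (hP : P ∈ Subring.center (ExteriorAlgebra R M))
    (hQ : Q ∈ Subring.center (ExteriorAlgebra R M))
    (hS : S ∈ Subring.center (ExteriorAlgebra R M))
    (hT : T ∈ Subring.center (ExteriorAlgebra R M)) {t : ℕ} (ht : 1 ≤ t) :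
    (α * β * γ * δ - (P * γ * δ + β * γ * T + α * S * δ + α * β * Q) + (S * T + P * Q)) ^ t
      = (S * T + P * Q) ^ (t - 1) *
        (t ^ 2 • (α * β * γ * δ) - t • (P * γ * δ + β * γ * T + α * S * δ + α * β * Q)
          + (S * T + P * Q)) := by
  obtain ⟨n, rfl⟩ := Nat.exists_eq_add_of_le' ht
  obtain ⟨a, rfl⟩ := hα
  obtain ⟨b, rfl⟩ := hβ
  obtain ⟨c, rfl⟩ := hγ
  obtain ⟨d, rfl⟩ := hδ
  have hSd : ι R a * S * ι R d = ι R a * ι R d * S := by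
    rw [mul_assoc, mul_assoc, Subring.mem_center_iff.mp hS]
  have power_formula := mul_sub_add_pow_succ_of_mul_eq_mul
    (P := ⟨P, hP⟩) (Q := ⟨Q, hQ⟩) (S := ⟨S, hS⟩) (T := ⟨T, hT⟩)
    (sq_eq_zero a b) (sq_eq_zero c d) (sq_eq_zero b c) (sq_eq_zero a d)
    (mul_eq_zero_of_right_eq_left a b c) (mul_eq_zero_of_left_eq_left a b d)
    (mul_eq_zero_of_right_eq_left b c d) (mul_eq_zero_of_right_eq_right c a d)
    (inner_mul_outer a b c d) n
  apply_fun (Subring.center (ExteriorAlgebra R M)).subtype at power_formula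
  simp only [map_pow, map_mul, map_add, map_sub, map_nsmul, Subring.subtype_apply,
    centralBivector] at power_formula
  simpa only [hSd, mul_assoc, Nat.add_sub_cancel] using power_formula

end ExteriorAlgebra

theorem sum_smul_eGen_mem_range_ι {m : ℕ} (k : Fin 4) (r : Fin m → PolyR m) :
    ∑ i, r i • eGen m k i ∈ LinearMap.range (ExteriorAlgebra.ι (PolyR m) (M := ModM m)) :=
  sum_mem fun i _ ↦ Submodule.smul_mem _ (r i) ⟨_, rfl⟩

theorem sum_eGen_mul_eGen_mem_center {m : ℕ} (k l : Fin 4) :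
    ∑ i, eGen m k i * eGen m l i ∈ Subring.center (Lam m) :=
  sum_mem fun _ _ ↦ ι_mul_ι_mem_center _ _

/-- `(I₁ − I₂ + I₃)^{∧t} = I₃^{∧(t−1)} ∧ (t² I₁ − t I₂ + I₃)` for every `t ≥ 1`. -/
theorem stmt4 (m : ℕ) (hm : 1 ≤ m) (t : ℕ) (ht : 1 ≤ t) :
    (I1 m - I2 m + I3 m) ^ t
      = I3 m ^ (t - 1) * ((t ^ 2) • I1 m - t • I2 m + I3 m) := by
  exact stmt4_general
    (sum_smul_eGen_mem_range_ι 0 _) (sum_smul_eGen_mem_range_ι 1 _)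
    (sum_smul_eGen_mem_range_ι 2 _) (sum_smul_eGen_mem_range_ι 3 _)
    (sum_eGen_mul_eGen_mem_center 0 1) (sum_eGen_mul_eGen_mem_center 2 3)
    (sum_eGen_mul_eGen_mem_center 1 2) (sum_eGen_mul_eGen_mem_center 0 3) ht
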